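/- In the Random Edge graph setting, assume additionally that G is 3-connected. Then for every vertex v ∈ V one has E(v) ≤ (130/87)·n − 115/29. (This is the combinatorial form of Theorem 3.2: the expected number of pivot steps taken by Random Edge on a 3-dimensional linear program with n constraints is at most (130/87)·n − 115/29.) -/

import Mathlib

open Finset

/-!
Write `d v` for the number of lower neighbours of `v`. The proof bounds `87 * E v` by the potential
`1 + 88 * N₁ v + 42 * N₂ v`, by induction along the order; the bound gains an extra `1` at the
`1`-vertices. The weights are exactly what the recursion for `E` needs, except when the lower
neighbours of a `2`-vertex lie immediately below it in the order. There one expands `E` a few levels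
further: a vertex that is a lower neighbour of two vertices has `d ≤ 1`, hence a cheaper lower
neighbour, unless the vertices involved have only two neighbours outside, which `3`-connectivity
forbids. At the top vertex, which has three lower neighbours, the bound is exceeded by at most `44`.
Counting vertices and edges shows that a graph with `2n - 4` vertices has `n - 3` vertices of each
kind, so that `87 * E v ≤ 1 + (88 + 42) * (n - 3) + 44`.
-/

namespace RandomEdge

open scoped BigOperators

/-! ### Cuts of regular graphs -/

section Cuts

variable {V : Type*} [Fintype V] {G : SimpleGraph V} [DecidableRel G.Adj]

theorem even_card_of_isRegularOfDegree_odd {k : ℕ} (hk : Odd k) (h : G.IsRegularOfDegree k) :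
    Even (Fintype.card V) := by
  have hsum := G.sum_degrees_eq_twice_card_edges
  simp only [h.degree_eq, sum_const, smul_eq_mul, card_univ] at hsum
  exact (Nat.even_mul.1 ⟨_, hsum.trans (two_mul _)⟩).resolve_right (Nat.not_even_iff_odd.2 hk)

variable [DecidableEq V]

theorem union_eq_univ_of_neighborFinset_subset {A S : Finset V}
    (hconn : (G.induce (S : Set V)ᶜ).Preconnected) (hA : A.Nonempty) (hAS : Disjoint A S)
    (hsub : ∀ a ∈ A, G.neighborFinset a ⊆ A ∪ S) : A ∪ S = univ := by
  by_contra hne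
  obtain ⟨z, hz⟩ : ∃ z, z ∉ A ∪ S := by simpa [eq_univ_iff_forall] using hne
  obtain ⟨hzA, hzS⟩ := not_or.1 (mt mem_union.2 hz)
  obtain ⟨a, ha⟩ := hA
  obtain ⟨walk⟩ := hconn ⟨a, disjoint_left.1 hAS ha⟩ ⟨z, hzS⟩
  obtain ⟨e, -, hfst, hsnd⟩ := walk.exists_boundary_dart {x | x.1 ∈ A} ha hzA
  have hadj : G.Adj e.fst.1 e.snd.1 := e.adj
  rcases mem_union.1 (hsub _ hfst ((G.mem_neighborFinset _ _).2 hadj)) with h | h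
  · exact hsnd h
  · exact e.snd.2 h

/-- `3`-connectivity: at least three vertices must be removed to disconnect the graph. -/
def IsThreeConnected (G : SimpleGraph V) : Prop :=
  ∀ S : Finset V, #S ≤ 2 → (G.induce (S : Set V)ᶜ).Connected

theorem IsThreeConnected.not_odd_card (hconn : IsThreeConnected G) (hV : Even (Fintype.card V))
    {A : Finset V} {p q : V} (hpq : p ≠ q) (hp : p ∉ A) (hq : q ∉ A)
    (hsub : ∀ a ∈ A, G.neighborFinset a ⊆ A ∪ {p, q}) : ¬Odd #A := by
  intro hodd
  have hdisj : Disjoint A {p, q} := by simp [hp, hq]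
  have huniv := union_eq_univ_of_neighborFinset_subset (hconn _ card_le_two).preconnected
    (card_pos.1 hodd.pos) hdisj hsub
  rw [← card_univ, ← huniv, card_union_of_disjoint hdisj, card_pair hpq] at hV
  exact Nat.not_even_iff_odd.2 (hodd.add_even even_two) hV

end Cuts

theorem exists_lt_eq_pair {α : Type*} [LinearOrder α] {s : Finset α} (h : #s = 2) :
    ∃ a b, a < b ∧ s = {a, b} := by
  obtain ⟨a, b, hab, rfl⟩ := card_eq_two.1 h
  rcases hab.lt_or_gt with hab | hba
  · exact ⟨a, b, hab, rfl⟩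
  · exact ⟨b, a, hba, pair_comm a b⟩

theorem exists_lt_lt_eq_triple {α : Type*} [LinearOrder α] {s : Finset α} (h : #s = 3) :
    ∃ a b c, a < b ∧ b < c ∧ s = {a, b, c} := by
  refine ⟨s.orderEmbOfFin h 0, s.orderEmbOfFin h 1, s.orderEmbOfFin h 2, by simp, by simp, ?_⟩
  have huniv : (univ : Finset (Fin 3)) = {0, 1, 2} := rfl
  conv_lhs => rw [← map_orderEmbOfFin_univ s h, huniv, map_insert, map_insert, map_singleton]
  rfl

/-! ### Lower neighbours and expected steps -/

section LowerNeighbors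

variable {V : Type*} [Fintype V] [LinearOrder V]

/-- The neighbours of `v` to which a pivot step from `v` can lead. -/
def lowerNeighbors (G : SimpleGraph V) [DecidableRel G.Adj] (v : V) : Finset V :=
  {w ∈ G.neighborFinset v | w < v}

/-- The number `d v` of lower neighbours of `v`. A vertex `v` with `d v = k` is a `k`-vertex. -/
def lowerDegree (G : SimpleGraph V) [DecidableRel G.Adj] (v : V) : ℕ :=
  #(lowerNeighbors G v)

/-- The graph of a simple `3`-polytope whose vertices are ordered by a generic linear objective:
only the regularity and the absence of nontrivial local optima are retained. -/
structure IsRandomEdgeGraph (G : SimpleGraph V) [DecidableRel G.Adj] : Prop where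
  isRegularOfDegree : G.IsRegularOfDegree 3
  lowerDegree_pos {v : V} : ¬IsMin v → 0 < lowerDegree G v
  exists_mem_lowerNeighbors {v : V} : ¬IsMax v → ∃ u, v ∈ lowerNeighbors G u

/-- `E v` is the expected number of Random Edge pivot steps started at `v`. -/
structure IsExpectedSteps (G : SimpleGraph V) [DecidableRel G.Adj] (E : V → ℝ) : Prop where
  eq_zero {v : V} : IsMin v → E v = 0
  eq_one_add {v : V} : ¬IsMin v → E v = 1 + 𝔼 w ∈ lowerNeighbors G v, E w

variable {G : SimpleGraph V} [DecidableRel G.Adj] {E : V → ℝ}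
  {a b c q t u v w w₁ w₂ x x₁ x₂ y : V}

theorem mem_lowerNeighbors : w ∈ lowerNeighbors G v ↔ G.Adj v w ∧ w < v := by
  simp [lowerNeighbors]

theorem adj_of_mem_lowerNeighbors (h : w ∈ lowerNeighbors G v) : G.Adj v w :=
  (mem_lowerNeighbors.1 h).1

theorem lt_of_mem_lowerNeighbors (h : w ∈ lowerNeighbors G v) : w < v :=
  (mem_lowerNeighbors.1 h).2

theorem lowerNeighbors_eq_empty (hv : IsMin v) : lowerNeighbors G v = ∅ :=
  filter_false_of_mem fun _ _ => hv.not_lt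

theorem lowerDegree_eq_zero (hv : IsMin v) : lowerDegree G v = 0 := by
  rw [lowerDegree, lowerNeighbors_eq_empty hv, card_empty]

theorem not_isMin_of_lowerDegree_pos (hv : 0 < lowerDegree G v) : ¬IsMin v :=
  fun h => hv.ne' (lowerDegree_eq_zero h)

namespace IsRandomEdgeGraph

theorem neighborFinset_eq (hG : IsRandomEdgeGraph G) (hab : a < b) (hbc : b < c)
    (ha : G.Adj v a) (hb : G.Adj v b) (hc : G.Adj v c) : G.neighborFinset v = {a, b, c} := by
  symm
  apply eq_of_subset_of_card_le
  · simp [insert_subset_iff, ha, hb, hc]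
  · rw [G.card_neighborFinset_eq_degree, hG.isRegularOfDegree v,
      card_eq_three.2 ⟨a, b, c, hab.ne, (hab.trans hbc).ne, hbc.ne, rfl⟩]

theorem lowerDegree_add_card_le (hG : IsRandomEdgeGraph G) {s : Finset V}
    (hs : ∀ a ∈ s, v ∈ lowerNeighbors G a) : lowerDegree G v + #s ≤ 3 := by
  have hdisj : Disjoint (lowerNeighbors G v) s := disjoint_left.2 fun w hw hws =>
    lt_asymm (lt_of_mem_lowerNeighbors hw) (lt_of_mem_lowerNeighbors (hs w hws))
  rw [lowerDegree, ← card_union_of_disjoint hdisj, ← hG.isRegularOfDegree v,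
    ← G.card_neighborFinset_eq_degree]
  refine card_le_card (union_subset (filter_subset _ _) fun w hw => ?_)
  exact (G.mem_neighborFinset _ _).2 (adj_of_mem_lowerNeighbors (hs w hw)).symm

theorem lowerDegree_le_two (hG : IsRandomEdgeGraph G) (hv : ¬IsMax v) : lowerDegree G v ≤ 2 := by
  obtain ⟨u, hu⟩ := hG.exists_mem_lowerNeighbors hv
  have := hG.lowerDegree_add_card_le (s := {u}) (by simpa using hu)
  rw [card_singleton] at this
  lia

theorem lowerDegree_eq_one_or_two (hG : IsRandomEdgeGraph G) (hmin : ¬IsMin v) (hmax : ¬IsMax v) :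
    lowerDegree G v = 1 ∨ lowerDegree G v = 2 := by
  have := hG.lowerDegree_pos hmin
  have := hG.lowerDegree_le_two hmax
  lia

theorem lowerDegree_le_one (hG : IsRandomEdgeGraph G) (ha : v ∈ lowerNeighbors G a)
    (hb : v ∈ lowerNeighbors G b) (hab : a ≠ b) : lowerDegree G v ≤ 1 := by
  have := hG.lowerDegree_add_card_le (v := v) (s := {a, b}) (by simp [ha, hb])
  rw [card_pair hab] at this
  lia

theorem lowerDegree_eq_one (hG : IsRandomEdgeGraph G) (hv : ¬IsMin v)
    (ha : v ∈ lowerNeighbors G a) (hb : v ∈ lowerNeighbors G b) (hab : a ≠ b) :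
    lowerDegree G v = 1 :=
  (hG.lowerDegree_le_one ha hb hab).antisymm (hG.lowerDegree_pos hv)

theorem isMin_of_mem_lowerNeighbors_three (hG : IsRandomEdgeGraph G) (hab : a < b) (hbc : b < c)
    (ha : v ∈ lowerNeighbors G a) (hb : v ∈ lowerNeighbors G b) (hc : v ∈ lowerNeighbors G c) :
    IsMin v := by
  by_contra hv
  have := hG.lowerDegree_pos hv
  have := hG.lowerDegree_add_card_le (v := v) (s := {a, b, c}) (by simp [ha, hb, hc])
  rw [card_eq_three.2 ⟨a, b, c, hab.ne, (hab.trans hbc).ne, hbc.ne, rfl⟩] at this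
  lia

theorem lowerDegree_eq_three (hG : IsRandomEdgeGraph G) (hv : IsMax v) :
    lowerDegree G v = 3 := by
  rw [← hG.isRegularOfDegree v, lowerDegree, lowerNeighbors, filter_true_of_mem,
    G.card_neighborFinset_eq_degree]
  intro w hw
  exact (hv.isTop w).lt_of_ne ((G.mem_neighborFinset _ _).1 hw).ne'

theorem lowerDegree_le_three (hG : IsRandomEdgeGraph G) (v : V) : lowerDegree G v ≤ 3 :=
  (card_filter_le _ _).trans_eq (hG.isRegularOfDegree v)

theorem lowerDegree_eq_zero_iff (hG : IsRandomEdgeGraph G) : lowerDegree G v = 0 ↔ IsMin v :=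
  ⟨fun h => by_contra fun hv => (hG.lowerDegree_pos hv).ne' h, lowerDegree_eq_zero⟩

theorem lowerDegree_eq_three_iff (hG : IsRandomEdgeGraph G) : lowerDegree G v = 3 ↔ IsMax v := by
  refine ⟨fun h => by_contra fun hv => ?_, hG.lowerDegree_eq_three⟩
  have := hG.lowerDegree_le_two hv
  lia

theorem even_card (hG : IsRandomEdgeGraph G) : Even (Fintype.card V) :=
  even_card_of_isRegularOfDegree_odd (by decide) hG.isRegularOfDegree

end IsRandomEdgeGraph

namespace IsExpectedSteps

theorem eq_one_add_sum_div (hE : IsExpectedSteps G E) (hv : 0 < lowerDegree G v) :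
    E v = 1 + (∑ w ∈ lowerNeighbors G v, E w) / lowerDegree G v := by
  rw [hE.eq_one_add (not_isMin_of_lowerDegree_pos hv), expect_eq_sum_div_card, lowerDegree]

theorem exists_eq_of_lowerDegree_eq_one (hE : IsExpectedSteps G E) (hv : lowerDegree G v = 1) :
    ∃ x ∈ lowerNeighbors G v, E v = 1 + E x := by
  obtain ⟨x, hx⟩ := card_eq_one.1 hv
  refine ⟨x, by simp [hx], ?_⟩
  rw [hE.eq_one_add_sum_div (by simp [hv]), hv, hx, sum_singleton, Nat.cast_one, div_one]

theorem exists_eq_of_lowerDegree_eq_two (hE : IsExpectedSteps G E) (hv : lowerDegree G v = 2) :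
    ∃ x ∈ lowerNeighbors G v, ∃ y ∈ lowerNeighbors G v, x < y ∧ E v = 1 + (E x + E y) / 2 := by
  obtain ⟨x, y, hxy, hL⟩ := exists_lt_eq_pair hv
  refine ⟨x, by simp [hL], y, by simp [hL], hxy, ?_⟩
  rw [hE.eq_one_add_sum_div (by simp [hv]), hv, hL, sum_pair hxy.ne, Nat.cast_two]

theorem exists_eq_of_lowerDegree_eq_three (hE : IsExpectedSteps G E) (hv : lowerDegree G v = 3) :
    ∃ x ∈ lowerNeighbors G v, ∃ y ∈ lowerNeighbors G v, ∃ z ∈ lowerNeighbors G v,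
      x < y ∧ y < z ∧ E v = 1 + (E x + E y + E z) / 3 := by
  obtain ⟨x, y, z, hxy, hyz, hL⟩ := exists_lt_lt_eq_triple hv
  refine ⟨x, by simp [hL], y, by simp [hL], z, by simp [hL], hxy, hyz, ?_⟩
  rw [hE.eq_one_add_sum_div (by simp [hv]), hv, hL,
    sum_insert (by simp [hxy.ne, (hxy.trans hyz).ne]), sum_pair hyz.ne, add_assoc, Nat.cast_ofNat]

end IsExpectedSteps

/-! ### Counting vertices and the potential -/

/-- The number `N_k v` of `k`-vertices that are not above `v`. -/
def countBelow (G : SimpleGraph V) [DecidableRel G.Adj] (k : ℕ) (v : V) : ℕ :=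
  #{w | w ≤ v ∧ lowerDegree G w = k}

theorem countBelow_mono (k : ℕ) (huv : u ≤ v) : countBelow G k u ≤ countBelow G k v :=
  card_le_card (monotone_filter_right _ fun _ _ h => h.imp_left huv.trans')

theorem countBelow_lt {k : ℕ} (huv : u < v) (hv : lowerDegree G v = k) :
    countBelow G k u < countBelow G k v :=
  card_lt_card <| (ssubset_iff_of_subset
    (monotone_filter_right _ fun _ _ h => h.imp_left huv.le.trans')).2
      ⟨v, by simp [hv], by simp [huv]⟩

theorem countBelow_of_isTop (k : ℕ) (hb : IsTop b) :
    countBelow G k b = #{w | lowerDegree G w = k} := by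
  simp [countBelow, hb _]

theorem two_mul_sum_lowerDegree (hG : IsRandomEdgeGraph G) :
    2 * ∑ v, lowerDegree G v = 3 * Fintype.card V := by
  have hswap : ∑ v, lowerDegree G v = ∑ v, #{w ∈ G.neighborFinset v | ¬w < v} := by
    convert sum_card_bipartiteAbove_eq_sum_card_bipartiteBelow (s := univ) (t := univ)
      (fun v w => w ∈ lowerNeighbors G v) using 3 with v _ v
    · simp [lowerDegree, bipartiteAbove]
    · ext w
      simp only [mem_filter, SimpleGraph.mem_neighborFinset, bipartiteBelow, mem_univ, true_and,
        mem_lowerNeighbors, G.adj_comm w v, not_lt]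
      exact and_congr_right fun h => h.ne.le_iff_lt
  have hsplit (v : V) : lowerDegree G v + #{w ∈ G.neighborFinset v | ¬w < v} = 3 :=
    (card_filter_add_card_filter_not _).trans (hG.isRegularOfDegree v)
  have hsum := sum_congr (s₁ := univ) rfl fun v _ => hsplit v
  rw [sum_add_distrib, ← hswap, sum_const, card_univ, smul_eq_mul] at hsum
  lia

theorem sum_comp_lowerDegree (hG : IsRandomEdgeGraph G) (ha : IsBot a) (hb : IsTop b) (f : ℕ → ℕ) :
    ∑ v, f (lowerDegree G v) = f 0 + countBelow G 1 b * f 1 + countBelow G 2 b * f 2 + f 3 := by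
  have hmin : ({v | lowerDegree G v = 0} : Finset V) = {a} := by
    ext v
    simp only [mem_filter, mem_univ, true_and, hG.lowerDegree_eq_zero_iff, mem_singleton]
    exact ⟨fun h => h.eq_of_ge (ha v), fun h => h ▸ ha.isMin⟩
  have hmax : ({v | lowerDegree G v = 3} : Finset V) = {b} := by
    ext v
    simp only [mem_filter, mem_univ, true_and, hG.lowerDegree_eq_three_iff, mem_singleton]
    exact ⟨fun h => h.eq_of_le (hb v), fun h => h ▸ hb.isMax⟩
  have hmaps (v : V) (_ : v ∈ univ) : lowerDegree G v ∈ range 4 :=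
    mem_range_succ_iff.2 (hG.lowerDegree_le_three v)
  rw [← sum_fiberwise_of_maps_to' hmaps f]
  simp only [sum_const, smul_eq_mul, sum_range_succ, range_zero, sum_empty, zero_add,
    countBelow_of_isTop _ hb, hmin, hmax, card_singleton, one_mul]

theorem two_mul_countBelow_add_two (hG : IsRandomEdgeGraph G) (ha : IsBot a) (hb : IsTop b) :
    2 * countBelow G 1 b + 2 = Fintype.card V ∧ 2 * countBelow G 2 b + 2 = Fintype.card V := by
  have hdeg := sum_comp_lowerDegree hG ha hb id
  have hcard := sum_comp_lowerDegree hG ha hb fun _ => 1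
  have htotal := two_mul_sum_lowerDegree hG
  simp only [id_eq, sum_const, card_univ, smul_eq_mul] at hdeg hcard
  lia

/-- The potential `1 + 88 * N₁ v + 42 * N₂ v` against which `87 * E v` is compared. -/
def potential (G : SimpleGraph V) [DecidableRel G.Adj] (v : V) : ℝ :=
  1 + 88 * countBelow G 1 v + 42 * countBelow G 2 v

theorem one_le_potential (v : V) : 1 ≤ potential G v := by
  rw [potential, add_assoc]
  exact le_add_of_nonneg_right (by positivity)

theorem potential_mono (huv : u ≤ v) : potential G u ≤ potential G v := by
  have h₁ : (countBelow G 1 u : ℝ) ≤ countBelow G 1 v := mod_cast countBelow_mono 1 huv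
  have h₂ : (countBelow G 2 u : ℝ) ≤ countBelow G 2 v := mod_cast countBelow_mono 2 huv
  unfold potential
  linarith

theorem potential_add_le_of_lowerDegree_eq_one (huv : u < v) (hv : lowerDegree G v = 1) :
    potential G u + 88 ≤ potential G v := by
  have h₁ : (countBelow G 1 u + 1 : ℝ) ≤ countBelow G 1 v := mod_cast countBelow_lt huv hv
  have h₂ : (countBelow G 2 u : ℝ) ≤ countBelow G 2 v := mod_cast countBelow_mono 2 huv.le
  unfold potential
  linarith

theorem potential_add_le_of_lt (hG : IsRandomEdgeGraph G) (huv : u < v) (hv : ¬IsMax v) :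
    potential G u + 42 ≤ potential G v := by
  rcases hG.lowerDegree_eq_one_or_two huv.not_isMin hv with hdv | hdv
  · linarith [potential_add_le_of_lowerDegree_eq_one huv hdv]
  · have h₁ : (countBelow G 1 u : ℝ) ≤ countBelow G 1 v := mod_cast countBelow_mono 1 huv.le
    have h₂ : (countBelow G 2 u + 1 : ℝ) ≤ countBelow G 2 v := mod_cast countBelow_lt huv hdv
    unfold potential
    linarith

theorem potential_add_le_of_not_covBy (hG : IsRandomEdgeGraph G) (huv : u < v) (hv : ¬IsMax v)
    (hcov : ¬u ⋖ v) : potential G u + 84 ≤ potential G v := by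
  obtain ⟨t, hut, htv⟩ := (not_covBy_iff huv).1 hcov
  linarith [potential_add_le_of_lt hG hut htv.not_isMax, potential_add_le_of_lt hG htv hv]

theorem potential_add_le_of_not_covBy_of_lowerDegree_eq_one (hG : IsRandomEdgeGraph G)
    (huv : u < v) (hv : lowerDegree G v = 1) (hcov : ¬u ⋖ v) :
    potential G u + 130 ≤ potential G v := by
  obtain ⟨t, hut, htv⟩ := (not_covBy_iff huv).1 hcov
  linarith [potential_add_le_of_lt hG hut htv.not_isMax,
    potential_add_le_of_lowerDegree_eq_one htv hv]

/-- The statement at `v` of the induction: `87 * E v` is at most the potential of `v`, with a slack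
of `1` where `d v ≤ 1`. -/
structure PotentialBound (G : SimpleGraph V) [DecidableRel G.Adj] (E : V → ℝ) (v : V) : Prop where
  le : 87 * E v ≤ potential G v
  add_one_le : lowerDegree G v ≤ 1 → 87 * E v + 1 ≤ potential G v

/-! ### Configurations excluded by `3`-connectivity -/

namespace IsRandomEdgeGraph

theorem notMem_lowerNeighbors_of_triangle (hG : IsRandomEdgeGraph G) (hconn : IsThreeConnected G)
    (hyw₁ : y ∈ lowerNeighbors G w₁) (hyw₂ : y ∈ lowerNeighbors G w₂)
    (hw : w₁ ∈ lowerNeighbors G w₂) (hw₁v : w₁ ∈ lowerNeighbors G v)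
    (hw₂v : w₂ ∈ lowerNeighbors G v) : v ∉ lowerNeighbors G u := by
  intro hvu
  rw [mem_lowerNeighbors] at *
  have hNw₁ := hG.neighborFinset_eq hyw₂.2 hw₂v.2 hyw₁.1 hw.1.symm hw₁v.1.symm
  have hNw₂ := hG.neighborFinset_eq hyw₁.2 hw₁v.2 hyw₂.1 hw.1 hw₂v.1.symm
  have hNv := hG.neighborFinset_eq hw.2 (hw₂v.2.trans hvu.2) hw₁v.1 hw₂v.1 hvu.1.symm
  refine hconn.not_odd_card hG.even_card (A := {w₁, w₂, v}) (p := y) (q := u) ?_ ?_ ?_ ?_ ?_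
  · order
  · simp only [mem_insert, mem_singleton]
    grind
  · simp only [mem_insert, mem_singleton]
    grind
  · simp [hNw₁, hNw₂, hNv, insert_subset_iff]
  · rw [card_eq_three.2 ⟨w₁, w₂, v, hw.2.ne, hw₁v.2.ne, hw₂v.2.ne, rfl⟩]
    decide

theorem notMem_lowerNeighbors_of_diamond (hG : IsRandomEdgeGraph G) (hconn : IsThreeConnected G)
    (hxy : x ∈ lowerNeighbors G y)
    (hxw₁ : x ∈ lowerNeighbors G w₁) (hyw₁ : y ∈ lowerNeighbors G w₁)
    (hxw₂ : x ∈ lowerNeighbors G w₂) (hyw₂ : y ∈ lowerNeighbors G w₂)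
    (hw : w₁ < w₂) (hwv : w₂ < v) : w₁ ∉ lowerNeighbors G v := by
  intro hw₁v
  rw [mem_lowerNeighbors] at *
  have hNx := hG.neighborFinset_eq hyw₁.2 hw hxy.1.symm hxw₁.1.symm hxw₂.1.symm
  have hNy := hG.neighborFinset_eq hxw₁.2 hw hxy.1 hyw₁.1.symm hyw₂.1.symm
  have hNw₁ := hG.neighborFinset_eq hxy.2 (hyw₁.2.trans hw₁v.2) hxw₁.1 hyw₁.1 hw₁v.1.symm
  refine hconn.not_odd_card hG.even_card (A := {x, y, w₁}) (p := w₂) (q := v) hwv.ne ?_ ?_ ?_ ?_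
  · simp only [mem_insert, mem_singleton]
    grind
  · simp only [mem_insert, mem_singleton]
    grind
  · simp [hNx, hNy, hNw₁, insert_subset_iff]
  · rw [card_eq_three.2 ⟨x, y, w₁, hxy.2.ne, hxw₁.2.ne, hyw₁.2.ne, rfl⟩]
    decide

theorem notMem_lowerNeighbors_of_two_triangles (hG : IsRandomEdgeGraph G)
    (hconn : IsThreeConnected G) (hqx : q ∈ lowerNeighbors G x) (hqy : q ∈ lowerNeighbors G y)
    (hxy : x ∈ lowerNeighbors G y) (hxw₂ : x ∈ lowerNeighbors G w₂) (hyw₁ : y ∈ lowerNeighbors G w₁)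
    (hw : w₁ ∈ lowerNeighbors G w₂) (hw₁v : w₁ ∈ lowerNeighbors G v)
    (hw₂v : w₂ ∈ lowerNeighbors G v) : v ∉ lowerNeighbors G u := by
  intro hvu
  rw [mem_lowerNeighbors] at *
  have hyw₂ := hyw₁.2.trans hw.2
  have hNx := hG.neighborFinset_eq hqy.2 hyw₂ hqx.1 hxy.1.symm hxw₂.1.symm
  have hNy := hG.neighborFinset_eq hqx.2 (hxy.2.trans hyw₁.2) hqy.1 hxy.1 hyw₁.1.symm
  have hNw₁ := hG.neighborFinset_eq hyw₂ hw₂v.2 hyw₁.1 hw.1.symm hw₁v.1.symm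
  have hNw₂ := hG.neighborFinset_eq (hxy.2.trans hyw₁.2) hw₁v.2 hxw₂.1 hw.1 hw₂v.1.symm
  have hNv := hG.neighborFinset_eq hw.2 (hw₂v.2.trans hvu.2) hw₁v.1 hw₂v.1 hvu.1.symm
  refine hconn.not_odd_card hG.even_card (A := {x, y, w₁, w₂, v}) (p := q) (q := u) ?_ ?_ ?_ ?_ ?_
  · order
  · simp only [mem_insert, mem_singleton]
    grind
  · simp only [mem_insert, mem_singleton]
    grind
  · simp [hNx, hNy, hNw₁, hNw₂, hNv, insert_subset_iff]
  · rw [show #{x, y, w₁, w₂, v} = 5 by grind (splits := 12)]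
    decide

end IsRandomEdgeGraph

/-! ### Pairs of vertices below a vertex -/

theorem add_three_mul_add_le_of_lowerDegree_eq_one (hG : IsRandomEdgeGraph G)
    (hE : IsExpectedSteps G E) (ih : ∀ u < c, PotentialBound G E u) (hac : a ∈ lowerNeighbors G c)
    (hab : a < b) (hbc : b < c) (hb : lowerDegree G b = 1) :
    87 * (E a + 3 * E b) + 95 ≤ 4 * potential G b := by
  have hac' := lt_of_mem_lowerNeighbors hac
  have hEb := (ih b hbc).add_one_le hb.le
  by_cases hcov : a ⋖ b
  · have hgap := potential_add_le_of_lowerDegree_eq_one hab hb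
    obtain ⟨x, hx, hEx⟩ := hE.exists_eq_of_lowerDegree_eq_one hb
    rcases (hcov.le_of_lt (lt_of_mem_lowerNeighbors hx)).lt_or_eq with hxa | rfl
    · linarith [(ih a hac').le, (ih x (hxa.trans hac')).le,
        potential_add_le_of_lt hG hxa hac'.not_isMax]
    · linarith [(ih x hac').add_one_le (hG.lowerDegree_le_one hx hac hbc.ne)]
  · linarith [(ih a hac').le, potential_add_le_of_not_covBy_of_lowerDegree_eq_one hG hab hb hcov]

theorem le_potential_add_of_covBy_of_covBy (hG : IsRandomEdgeGraph G) (hE : IsExpectedSteps G E)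
    (ih : ∀ u < c, PotentialBound G E u) (hac : a ∈ lowerNeighbors G c) (hbc : b < c)
    (hat : a ⋖ t) (htb : t ⋖ b) (ht : lowerDegree G t = 2) (hb : lowerDegree G b = 2) :
    87 * E b ≤ potential G a + 78 := by
  have hac' := lt_of_mem_lowerNeighbors hac
  have ha := hac'.not_isMax
  have bound {u : V} (hu : u < a) := (ih u (hu.trans hac')).le
  obtain ⟨x₁, hx₁, x₂, hx₂, hx, hEb⟩ := hE.exists_eq_of_lowerDegree_eq_two hb
  rcases (htb.le_of_lt (lt_of_mem_lowerNeighbors hx₂)).lt_or_eq with hx₂t | rfl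
  · rcases (hat.le_of_lt hx₂t).lt_or_eq with hx₂a | rfl
    · linarith [bound (hx.trans hx₂a), bound hx₂a, potential_add_le_of_lt hG hx₂a ha,
        potential_add_le_of_lt hG hx hx₂a.not_isMax]
    · linarith [bound hx, (ih x₂ hac').le, potential_add_le_of_lowerDegree_eq_one hx
        (hG.lowerDegree_eq_one hx.not_isMin hx₂ hac hbc.ne)]
  obtain ⟨r₁, -, r₂, hr₂, hr, hEt⟩ := hE.exists_eq_of_lowerDegree_eq_two ht
  have hx₁a := hat.le_of_lt hx
  have hbx := htb.lt
  rcases (hat.le_of_lt (lt_of_mem_lowerNeighbors hr₂)).lt_or_eq with hr₂a | rfl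
  · rcases hx₁a.lt_or_eq with hx₁a | rfl
    · linarith [bound hx₁a, bound hr₂a, bound (hr.trans hr₂a), potential_add_le_of_lt hG hx₁a ha,
        potential_add_le_of_lt hG hr₂a ha, potential_add_le_of_lt hG hr hr₂a.not_isMax]
    · have hd := hG.lowerDegree_eq_one hr₂a.not_isMin hx₁ hac hbc.ne
      linarith [(ih x₁ hac').add_one_le hd.le, bound hr₂a, bound (hr.trans hr₂a),
        potential_add_le_of_lowerDegree_eq_one hr₂a hd,
        potential_add_le_of_lt hG hr hr₂a.not_isMax]
  · have hd := hG.lowerDegree_eq_one hr.not_isMin hr₂ hac (hbx.trans hbc).ne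
    rcases hx₁a.lt_or_eq with hx₁a | rfl
    · linarith [(ih r₂ hac').le, bound hr, bound hx₁a,
        potential_add_le_of_lowerDegree_eq_one hr hd,
        potential_add_le_of_lowerDegree_eq_one hx₁a hd]
    · exact absurd (hG.isMin_of_mem_lowerNeighbors_three hbx hbc hr₂ hx₁ hac) hr.not_isMin

theorem potential_add_le_or_exists_covBy_covBy (hG : IsRandomEdgeGraph G) (hab : a < b)
    (hb : ¬IsMax b) (hcov : ¬a ⋖ b) :
    potential G a + 126 ≤ potential G b ∨ ∃ t, a ⋖ t ∧ t ⋖ b ∧ lowerDegree G t = 2 := by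
  obtain ⟨t, hat, htb⟩ := (not_covBy_iff hab).1 hcov
  have ht := htb.not_isMax
  have hgap := potential_add_le_of_lt hG htb hb
  by_cases hcat : a ⋖ t
  · by_cases hctb : t ⋖ b
    · rcases hG.lowerDegree_eq_one_or_two hat.not_isMin ht with hdt | hdt
      · left
        linarith [potential_add_le_of_lowerDegree_eq_one hat hdt]
      · exact .inr ⟨t, hcat, hctb, hdt⟩
    · left
      linarith [potential_add_le_of_lt hG hat ht, potential_add_le_of_not_covBy hG htb hb hctb]
  · left
    linarith [potential_add_le_of_not_covBy hG hat ht hcat]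

-- The constant `90` makes a `2`-vertex with lower neighbours `a < b` satisfy
-- `87 * E v ≤ potential G b + 42`.
theorem add_three_mul_add_le_and_add_add_le_of_not_covBy (hG : IsRandomEdgeGraph G)
    (hE : IsExpectedSteps G E) (ih : ∀ u < c, PotentialBound G E u) (hac : a ∈ lowerNeighbors G c)
    (hab : a < b) (hbc : b < c) (h : ¬(a ⋖ b ∧ lowerDegree G b = 2)) :
    87 * (E a + 3 * E b) + 95 ≤ 4 * potential G b ∧ 87 * (E a + E b) + 90 ≤ 2 * potential G b := by
  have hEa := (ih a (hab.trans hbc)).le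
  have hEb := (ih b hbc).le
  rcases hG.lowerDegree_eq_one_or_two hab.not_isMin hbc.not_isMax with hb | hb
  · have hI := add_three_mul_add_le_of_lowerDegree_eq_one hG hE ih hac hab hbc hb
    have hgap := potential_add_le_of_lowerDegree_eq_one hab hb
    exact ⟨hI, by linarith⟩
  have hcov : ¬a ⋖ b := fun hcov => h ⟨hcov, hb⟩
  obtain hgap | ⟨t, hat, htb, ht⟩ :=
    potential_add_le_or_exists_covBy_covBy hG hab hbc.not_isMax hcov
  · constructor <;> linarith
  · have hgap := potential_add_le_of_not_covBy hG hab hbc.not_isMax hcov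
    have hEb' := le_potential_add_of_covBy_of_covBy hG hE ih hac hbc hat htb ht hb
    constructor <;> linarith

theorem add_three_mul_add_le_or_exists_triangle_of_covBy (hG : IsRandomEdgeGraph G)
    (hE : IsExpectedSteps G E) (ih : ∀ u < c, PotentialBound G E u) (hac : a ∈ lowerNeighbors G c)
    (hbc : b < c) (hab : a ⋖ b) (hb : lowerDegree G b = 2) :
    87 * (E a + 3 * E b) + 95 ≤ 4 * potential G b ∨
      a ∈ lowerNeighbors G b ∧ ∃ q ∈ lowerNeighbors G a, q ∈ lowerNeighbors G b := by
  have hac' := lt_of_mem_lowerNeighbors hac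
  have bound {u : V} (hu : u < a) := (ih u (hu.trans hac')).le
  have hEa := (ih a hac').le
  have hgap := potential_add_le_of_lt hG hab.lt hbc.not_isMax
  obtain ⟨z₁, hz₁, z₂, hz₂, hz, hEb⟩ := hE.exists_eq_of_lowerDegree_eq_two hb
  rcases (hab.le_of_lt (lt_of_mem_lowerNeighbors hz₂)).lt_or_eq with hz₂a | rfl
  · left
    linarith [bound hz₂a, bound (hz.trans hz₂a), potential_add_le_of_lt hG hz₂a hac'.not_isMax,
      potential_add_le_of_lt hG hz hz₂a.not_isMax]
  have ha := hG.lowerDegree_eq_one hz.not_isMin hz₂ hac hbc.ne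
  have hgap₁ := potential_add_le_of_lowerDegree_eq_one hz ha
  obtain ⟨q, hq, hEq⟩ := hE.exists_eq_of_lowerDegree_eq_one ha
  have hqa := lt_of_mem_lowerNeighbors hq
  rcases lt_trichotomy q z₁ with hqz | rfl | hzq
  · left
    linarith [bound hz, bound hqa, potential_add_le_of_lt hG hqz hz.not_isMax]
  · exact .inr ⟨hz₂, q, hq, hz₁⟩
  · left
    linarith [bound hz, (ih z₂ hac').add_one_le ha.le, potential_add_le_of_lt hG hzq hqa.not_isMax,
      potential_add_le_of_lowerDegree_eq_one hqa ha]

/-! ### The induction -/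

-- If `w₁ < w₂` are the lower neighbours of `v`, and `x₁ < x₂` those of `w₂`, then the left-hand
-- side is `4 * (87 * E v - 84)`, while the potential rises by at least `84` from `w₁` to `v`.
theorem two_mul_add_add_add_le_of_covBy (hG : IsRandomEdgeGraph G) (hconn : IsThreeConnected G)
    (hE : IsExpectedSteps G E) (ih : ∀ u < v, PotentialBound G E u) (hx : x₁ < x₂)
    (hx₁w₂ : x₁ ∈ lowerNeighbors G w₂) (hx₂w₂ : x₂ ∈ lowerNeighbors G w₂) (hw : w₁ < w₂)
    (hw₁v : w₁ ∈ lowerNeighbors G v) (hw₂v : w₂ < v) (hcov : x₂ ⋖ w₁)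
    (hd : lowerDegree G w₁ = 2) :
    87 * (2 * E w₁ + E x₁ + E x₂) + 186 ≤ 4 * potential G w₁ := by
  have hxw₁ := hcov.lt
  have hx₂v := hxw₁.trans (lt_of_mem_lowerNeighbors hw₁v)
  have hx₂max := hxw₁.not_isMax
  have hgap := potential_add_le_of_lt hG hxw₁ hw.not_isMax
  have bound {u : V} (hu : u < x₂) := (ih u (hu.trans hx₂v)).le
  have hEx₁ := bound hx
  have hEx₂ := ih x₂ hx₂v
  obtain ⟨y₁, hy₁, y₂, hy₂, hy, hEw₁⟩ := hE.exists_eq_of_lowerDegree_eq_two hd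
  rcases (hcov.le_of_lt (lt_of_mem_lowerNeighbors hy₂)).lt_or_eq with hy₂x₂ | rfl
  · have hy₁gap := potential_add_le_of_lt hG hy hy₂x₂.not_isMax
    by_cases hcovx : x₁ ⋖ x₂
    · rcases (hcovx.le_of_lt hy₂x₂).lt_or_eq with hy₂x₁ | rfl
      · linarith [bound hy₂x₂, bound (hy.trans hy₂x₂), hEx₂.le,
          potential_add_le_of_lt hG hy₂x₁ hx.not_isMax, potential_add_le_of_lt hG hx hx₂max]
      · have hdx := hG.lowerDegree_eq_one hy.not_isMin hy₂ hx₁w₂ hw.ne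
        linarith [bound (hy.trans hy₂x₂), hEx₂.le, potential_add_le_of_lt hG hx hx₂max,
          potential_add_le_of_lowerDegree_eq_one hy hdx]
    · linarith [bound hy₂x₂, bound (hy.trans hy₂x₂), hEx₂.le,
        potential_add_le_of_lt hG hy₂x₂ hx₂max, potential_add_le_of_not_covBy hG hx hx₂max hcovx]
  have hdx := hG.lowerDegree_eq_one hx.not_isMin hy₂ hx₂w₂ hw.ne
  have hx₁gap := potential_add_le_of_lowerDegree_eq_one hx hdx
  have hy₁gap := potential_add_le_of_lowerDegree_eq_one hy hdx
  have hEx₂' := hEx₂.add_one_le hdx.le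
  by_cases hcovx : x₁ ⋖ y₂
  · rcases (hcovx.le_of_lt hy).lt_or_eq with hy₁x₁ | rfl
    · linarith [bound hy, potential_add_le_of_lt hG hy₁x₁ hx.not_isMax]
    obtain ⟨p, hp, hEp⟩ := hE.exists_eq_of_lowerDegree_eq_one hdx
    rcases (hcovx.le_of_lt (lt_of_mem_lowerNeighbors hp)).lt_or_eq with hpy | rfl
    · linarith [bound (hpy.trans hy), potential_add_le_of_lt hG hpy hy.not_isMax]
    · exact absurd hw₁v
        (hG.notMem_lowerNeighbors_of_diamond hconn hp hy₁ hy₂ hx₁w₂ hx₂w₂ hw hw₂v)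
  · linarith [bound hy,
      potential_add_le_of_not_covBy_of_lowerDegree_eq_one hG hx hdx hcovx]

theorem two_mul_add_add_add_le (hG : IsRandomEdgeGraph G) (hconn : IsThreeConnected G)
    (hE : IsExpectedSteps G E) (ih : ∀ u < v, PotentialBound G E u) (hx : x₁ < x₂)
    (hxw₁ : x₂ < w₁) (hx₁w₂ : x₁ ∈ lowerNeighbors G w₂) (hx₂w₂ : x₂ ∈ lowerNeighbors G w₂)
    (hw : w₁ < w₂) (hw₁v : w₁ ∈ lowerNeighbors G v) (hw₂v : w₂ < v) :
    87 * (2 * E w₁ + E x₁ + E x₂) + 186 ≤ 4 * potential G w₁ := by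
  have hw₁v' := lt_of_mem_lowerNeighbors hw₁v
  have hEw₁ := ih w₁ hw₁v'
  have hEx₂ := (ih x₂ (hxw₁.trans hw₁v')).le
  have hEx₁ := (ih x₁ (hx.trans (hxw₁.trans hw₁v'))).le
  have hgap := potential_add_le_of_lt hG hx hxw₁.not_isMax
  rcases hG.lowerDegree_eq_one_or_two hxw₁.not_isMin hw.not_isMax with hd | hd
  · linarith [hEw₁.add_one_le hd.le, potential_add_le_of_lowerDegree_eq_one hxw₁ hd]
  by_cases hcov : x₂ ⋖ w₁
  · exact two_mul_add_add_add_le_of_covBy hG hconn hE ih hx hx₁w₂ hx₂w₂ hw hw₁v hw₂v hcov hd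
  · linarith [hEw₁.le, potential_add_le_of_not_covBy hG hxw₁ hw.not_isMax hcov]

theorem le_potential_of_triangle (hG : IsRandomEdgeGraph G) (hconn : IsThreeConnected G)
    (hE : IsExpectedSteps G E) (ih : ∀ u < v, PotentialBound G E u) (hv : ¬IsMax v)
    (hEv : E v = 1 + (E w₁ + E w₂) / 2) (hEw₂ : E w₂ = 1 + (E x + E w₁) / 2)
    (hxw₂ : x ∈ lowerNeighbors G w₂) (hw : w₁ ∈ lowerNeighbors G w₂) (hxw₁ : x < w₁)
    (hw₁v : w₁ ∈ lowerNeighbors G v) (hw₂v : w₂ ∈ lowerNeighbors G v) :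
    87 * E v ≤ potential G v := by
  obtain ⟨u, hvu⟩ := hG.exists_mem_lowerNeighbors hv
  have hw' := lt_of_mem_lowerNeighbors hw
  have hw₂v' := lt_of_mem_lowerNeighbors hw₂v
  have hd := hG.lowerDegree_eq_one hxw₁.not_isMin hw hw₁v hw₂v'.ne
  obtain ⟨y, hy, hEw₁⟩ := hE.exists_eq_of_lowerDegree_eq_one hd
  have hyw₁ := lt_of_mem_lowerNeighbors hy
  have hyw₂ := hyw₁.trans hw'
  have hgap₁ := potential_add_le_of_lowerDegree_eq_one hyw₁ hd
  have hgap₂ := potential_add_le_of_lt hG hw' hw₂v'.not_isMax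
  have hgap₃ := potential_add_le_of_lt hG hw₂v' hv
  rcases lt_trichotomy y x with hyx | rfl | hxy
  · linarith [(ih x (hxw₁.trans (hw'.trans hw₂v'))).le, (ih y (hyw₂.trans hw₂v')).le,
      potential_add_le_of_lt hG hyx hxw₁.not_isMax,
      potential_add_le_of_lowerDegree_eq_one hxw₁ hd]
  · exact absurd hvu (hG.notMem_lowerNeighbors_of_triangle hconn hy hxw₂ hw hw₁v hw₂v)
  have ih' (u : V) (hu : u < w₂) := ih u (hu.trans hw₂v')
  -- `E v = 9 / 4 + (E x + 3 * E y) / 4`, and the potential rises by at least `172` from `y` to `v`.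
  suffices hpair : 87 * (E x + 3 * E y) + 95 ≤ 4 * potential G y by linarith
  by_cases hcov : x ⋖ y ∧ lowerDegree G y = 2
  · obtain hpair | ⟨hx, q, hqx, hqy⟩ :=
      add_three_mul_add_le_or_exists_triangle_of_covBy hG hE ih' hxw₂ hyw₂ hcov.1 hcov.2
    · exact hpair
    · exact absurd hvu
        (hG.notMem_lowerNeighbors_of_two_triangles hconn hqx hqy hx hxw₂ hy hw hw₁v hw₂v)
  · exact (add_three_mul_add_le_and_add_add_le_of_not_covBy hG hE ih' hxw₂ hxy hyw₂ hcov).1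

theorem le_potential_of_lowerDegree_eq_two (hG : IsRandomEdgeGraph G) (hconn : IsThreeConnected G)
    (hE : IsExpectedSteps G E) (ih : ∀ u < v, PotentialBound G E u) (hv : ¬IsMax v)
    (hd : lowerDegree G v = 2) : 87 * E v ≤ potential G v := by
  obtain ⟨w₁, hw₁, w₂, hw₂, hw, hEv⟩ := hE.exists_eq_of_lowerDegree_eq_two hd
  have hw₂v := lt_of_mem_lowerNeighbors hw₂
  have hgap := potential_add_le_of_lt hG hw₂v hv
  by_cases hcov : w₁ ⋖ w₂ ∧ lowerDegree G w₂ = 2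
  · obtain ⟨x₁, hx₁, x₂, hx₂, hx, hEw₂⟩ := hE.exists_eq_of_lowerDegree_eq_two hcov.2
    rcases (hcov.1.le_of_lt (lt_of_mem_lowerNeighbors hx₂)).lt_or_eq with hxw | rfl
    · linarith [two_mul_add_add_add_le hG hconn hE ih hx hxw hx₁ hx₂ hw hw₁ hw₂v,
        potential_add_le_of_lt hG hw hw₂v.not_isMax]
    · exact le_potential_of_triangle hG hconn hE ih hv hEv hEw₂ hx₁ hx₂ hx hw₁ hw₂
  · linarith [(add_three_mul_add_le_and_add_add_le_of_not_covBy hG hE ih hw₁ hw hw₂v hcov).2]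

theorem potentialBound (hG : IsRandomEdgeGraph G) (hconn : IsThreeConnected G)
    (hE : IsExpectedSteps G E) (hv : ¬IsMax v) : PotentialBound G E v := by
  induction v using WellFoundedLT.induction with
  | ind v ih =>
    replace ih (u : V) (hu : u < v) := ih u hu hu.not_isMax
    by_cases hmin : IsMin v
    · have hpos := one_le_potential (G := G) v
      have hEv := hE.eq_zero hmin
      exact ⟨by linarith, fun _ => by linarith⟩
    rcases hG.lowerDegree_eq_one_or_two hmin hv with hd | hd
    · obtain ⟨x, hx, hEv⟩ := hE.exists_eq_of_lowerDegree_eq_one hd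
      have hxv := lt_of_mem_lowerNeighbors hx
      have hEx := (ih x hxv).le
      have hgap := potential_add_le_of_lowerDegree_eq_one hxv hd
      exact ⟨by linarith, fun _ => by linarith⟩
    · exact ⟨le_potential_of_lowerDegree_eq_two hG hconn hE ih hv hd, fun h => by lia⟩

theorem le_potential_add_of_isMax (hG : IsRandomEdgeGraph G) (hconn : IsThreeConnected G)
    (hE : IsExpectedSteps G E) (hv : IsMax v) : 87 * E v ≤ potential G v + 44 := by
  obtain ⟨a, -, b, hb, c, hc, hab, hbc, hEv⟩ :=
    hE.exists_eq_of_lowerDegree_eq_three (hG.lowerDegree_eq_three hv)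
  have hcv := lt_of_mem_lowerNeighbors hc
  have bound {u : V} (hu : u ≤ c) :=
    (potentialBound hG hconn hE (hu.trans_lt hcv).not_isMax).le
  have hEa := bound (hab.trans hbc).le
  have hEb := bound hbc.le
  have hEc := bound le_rfl
  have hmono := potential_mono (G := G) hcv.le
  have hgap₁ := potential_add_le_of_lt hG hab hbc.not_isMax
  have hgap₂ := potential_add_le_of_lt hG hbc hcv.not_isMax
  rcases hG.lowerDegree_eq_one_or_two hbc.not_isMin hcv.not_isMax with hd | hd
  · linarith [potential_add_le_of_lowerDegree_eq_one hbc hd]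
  by_cases hcov : b ⋖ c
  · obtain ⟨r₁, -, r₂, hr₂, hr, hEc'⟩ := hE.exists_eq_of_lowerDegree_eq_two hd
    rcases (hcov.le_of_lt (lt_of_mem_lowerNeighbors hr₂)).lt_or_eq with hr₂b | rfl
    · linarith [bound (hr₂b.trans hbc).le, bound (hr.trans (hr₂b.trans hbc)).le,
        potential_add_le_of_lt hG hr₂b hbc.not_isMax, potential_add_le_of_lt hG hr hr₂b.not_isMax]
    · linarith [potential_add_le_of_lowerDegree_eq_one hab
        (hG.lowerDegree_eq_one hr.not_isMin hr₂ hb hcv.ne)]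
  · linarith [potential_add_le_of_not_covBy hG hbc hcv.not_isMax hcov]

theorem IsExpectedSteps.le_of_isThreeConnected (hE : IsExpectedSteps G E)
    (hG : IsRandomEdgeGraph G) (hconn : IsThreeConnected G) (ha : IsBot a) (hb : IsTop b) (v : V) :
    87 * E v ≤ 65 * Fintype.card V - 85 := by
  have hv : 87 * E v ≤ potential G b + 44 := by
    by_cases hmax : IsMax v
    · rw [hmax.eq_of_le (hb v)]
      exact le_potential_add_of_isMax hG hconn hE hb.isMax
    · linarith [(potentialBound hG hconn hE hmax).le, potential_mono (G := G) (hb v)]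
  obtain ⟨h₁, h₂⟩ := two_mul_countBelow_add_two hG ha hb
  have h₁' : (2 * countBelow G 1 b + 2 : ℝ) = Fintype.card V := mod_cast h₁
  have h₂' : (2 * countBelow G 2 b + 2 : ℝ) = Fintype.card V := mod_cast h₂
  unfold potential at hv
  linarith

end LowerNeighbors

end RandomEdge

theorem random_edge_thm32
    (n : ℕ) (hn : 4 ≤ n)
    (V : Type) [Fintype V] [LinearOrder V]
    (hcard : Fintype.card V = 2 * n - 4)
    (vmin vmax : V)
    (hvmin : ∀ v : V, vmin ≤ v) (hvmax : ∀ v : V, v ≤ vmax)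
    (G : SimpleGraph V) [DecidableRel G.Adj]
    (hreg : ∀ v : V, (G.neighborFinset v).card = 3)
    (low : V → Finset V)
    (hlow : ∀ v : V, low v = (G.neighborFinset v).filter (fun w => w < v))
    (d : V → ℕ) (hd : ∀ v : V, d v = (low v).card)
    (hlower : ∀ v : V, v ≠ vmin → 1 ≤ d v)
    (hupper : ∀ v : V, v ≠ vmax → ∃ u : V, G.Adj v u ∧ v < u)
    (E : V → ℝ) (hE0 : E vmin = 0)
    (hE : ∀ v : V, v ≠ vmin → E v = 1 + (1 / (d v : ℝ)) * ∑ w ∈ low v, E w)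
    (N1 N2 N : V → ℕ)
    (hN1 : ∀ v : V, N1 v = (Finset.univ.filter (fun w => w ≤ v ∧ d w = 1)).card)
    (hN2 : ∀ v : V, N2 v = (Finset.univ.filter (fun w => w ≤ v ∧ d w = 2)).card)
    (hN : ∀ v : V, N v = N1 v + N2 v)
    (hconn : ∀ S : Finset V, S.card ≤ 2 → (G.induce ((↑S : Set V)ᶜ)).Connected) :
    ∀ v : V, E v ≤ (130 / 87) * (n : ℝ) - 115 / 29 := by
  intro v
  have hbot : IsBot vmin := hvmin
  have htop : IsTop vmax := hvmax
  obtain rfl : low = RandomEdge.lowerNeighbors G := funext hlow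
  obtain rfl : d = RandomEdge.lowerDegree G := funext hd
  have hG : RandomEdge.IsRandomEdgeGraph G := {
    isRegularOfDegree v := hreg v
    lowerDegree_pos {v} hv := hlower v fun h => hv (h ▸ hbot.isMin)
    exists_mem_lowerNeighbors {v} hv := by
      obtain ⟨u, hadj, hlt⟩ := hupper v fun h => hv (h ▸ htop.isMax)
      exact ⟨u, RandomEdge.mem_lowerNeighbors.2 ⟨hadj.symm, hlt⟩⟩ }
  have hsteps : RandomEdge.IsExpectedSteps G E := {
    eq_zero {v} hv := hv.eq_of_ge (hbot v) ▸ hE0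
    eq_one_add {v} hv := by
      rw [hE v fun h => hv (h ▸ hbot.isMin), expect_eq_sum_div_card, one_div_mul_eq_div,
        RandomEdge.lowerDegree] }
  have hbound := hsteps.le_of_isThreeConnected hG hconn hbot htop v
  have hcard' : (Fintype.card V : ℝ) + 4 = 2 * n := by
    norm_cast
    lia
  linarith
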